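/- arXiv:2005.10242 — 3 statements merged into one kernel-verified Lean document; each statement's English description precedes it below -/
import Mathlib

section
/- Let τ > 0, m ≥ 2, and suppose there exists a perfectly uniform encoder, i.e., a Borel measurable f : ℝⁿ → S^{m−1} whose pushforward of p_data equals σ_{m−1}. Then the set of minimizers over all Borel measurable encoders g : ℝⁿ → S^{m−1} of the uniformity term E_{x∼p_data}[log E_{x⁻∼p_data}[e^{g(x⁻)·g(x)/τ}]] is exactly the set of perfectly uniform encoders. -/
open MeasureTheory Real Filter Metric
open scoped RealInnerProductSpace ENNReal Topology BigOperators

noncomputable section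

/-- `ℝ^n` as a Euclidean space. -/
abbrev Euc (n : ℕ) : Type := EuclideanSpace ℝ (Fin n)

/-- The unit sphere in `ℝ^m`; the sphere `S^d` of the informal statement is `Sph (d+1)`. -/
abbrev Sph (m : ℕ) := Metric.sphere (0 : Euc m) 1

/-- The uniform (normalized surface-area) probability measure on the unit sphere of `ℝ^m`. -/
noncomputable def unifSphere (m : ℕ) : Measure (Sph m) :=
  ((volume : Measure (Euc m)).toSphere Set.univ)⁻¹ • (volume : Measure (Euc m)).toSphere

/-- The uniformity term `E_{x∼p_data}[log E_{x⁻∼p_data}[exp(g(x⁻)·g(x)/τ)]]`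
of the limiting contrastive loss. -/
noncomputable def unifTerm {n m : ℕ} (pdata : Measure (Euc n)) (g : Euc n → Sph m) (τ : ℝ) : ℝ :=
  ∫ x, Real.log (∫ x', Real.exp (⟪(g x' : Euc m), (g x : Euc m)⟫ / τ) ∂pdata) ∂pdata

/-!
Write `K(x, y) = exp(⟨x, y⟩ / τ)`, let `μ` be the distribution of the encoded data and
`U = ∫ K(y, ·) dμ(y)` its potential; the uniformity term is `∫ log U dμ`. By rotation invariance
the uniform measure `σ` has constant potential `c`, hence uniformity term `log c`.

On the sphere `K` is a multiple of the Gaussian kernel `exp(-‖x - y‖² / (2τ))`. This is the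
characteristic function of a Gaussian measure `γ`, so the `K`-energy of a signed measure is the
`L²(γ)`-norm squared of its Fourier transform, and `K` is strictly positive definite.

Put `w = √(c / U)`. By AM-GM the energy of `w μ` is at most `∫ w² U dμ = c`, so positivity of the
energy of `σ - w μ`, that is `c - 2 c ∫ w dμ + E(w μ, w μ) ≥ 0`, gives `∫ w dμ ≤ 1`. Therefore
`log c - ∫ log U dμ = 2 ∫ log w dμ ≤ 2 (∫ w dμ - 1) ≤ 0`. In the case of equality `w = 1` almost
everywhere and the energy of `σ - w μ` vanishes, so `μ = w μ = σ`.
-/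

section KernelEnergy

variable {X Y : Type*} [MeasurableSpace X] [MeasurableSpace Y]

/-- The potential `x ↦ ∫ K(y, x) dμ(y)` of the measure `μ` for the kernel `K`. -/
def kernelPotential (K : X → X → ℝ) (μ : Measure X) (x : X) : ℝ :=
  ∫ y, K y x ∂μ

/-- The mutual energy `∬ K(y, x) dμ(y) dν(x)` of two measures for the kernel `K`. -/
def kernelEnergy (K : X → X → ℝ) (μ ν : Measure X) : ℝ :=
  ∫ x, kernelPotential K μ x ∂ν

/-- Symmetric, integrally strictly positive definite kernels: the energy of the difference
of two finite measures is nonnegative and vanishes only if they are equal. To avoid signed measures,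
the energy of `μ - ν` is expanded into `E(μ, μ) + E(ν, ν) - 2 E(μ, ν)`. The notion is meant for
bounded measurable kernels, for which all the integrals converge. -/
structure IsStrictPosDefKernel (K : X → X → ℝ) : Prop where
  symm : ∀ x y, K x y = K y x
  two_mul_kernelEnergy_le : ∀ (μ ν : Measure X) [IsFiniteMeasure μ] [IsFiniteMeasure ν],
    2 * kernelEnergy K μ ν ≤ kernelEnergy K μ μ + kernelEnergy K ν ν
  eq_of_kernelEnergy_le : ∀ (μ ν : Measure X) [IsFiniteMeasure μ] [IsFiniteMeasure ν],
    kernelEnergy K μ μ + kernelEnergy K ν ν ≤ 2 * kernelEnergy K μ ν → μ = ν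

lemma kernelEnergy_const_mul (r : ℝ) (K : X → X → ℝ) (μ ν : Measure X) :
    kernelEnergy (fun x y ↦ r * K x y) μ ν = r * kernelEnergy K μ ν := by
  simp only [kernelEnergy, kernelPotential, integral_const_mul]

lemma kernelEnergy_map {φ : Y → X} (hφ : MeasurableEmbedding φ) (K : X → X → ℝ)
    (μ ν : Measure Y) :
    kernelEnergy K (μ.map φ) (ν.map φ) = kernelEnergy (fun x y ↦ K (φ x) (φ y)) μ ν := by
  simp only [kernelEnergy, kernelPotential, hφ.integral_map]

namespace IsStrictPosDefKernel

variable {K : X → X → ℝ}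

lemma const_mul (hK : IsStrictPosDefKernel K) {r : ℝ} (hr : 0 < r) :
    IsStrictPosDefKernel fun x y ↦ r * K x y where
  symm x y := by rw [hK.symm]
  two_mul_kernelEnergy_le μ ν _ _ := by
    simp only [kernelEnergy_const_mul]
    nlinarith [hK.two_mul_kernelEnergy_le μ ν]
  eq_of_kernelEnergy_le μ ν _ _ hle := by
    simp only [kernelEnergy_const_mul] at hle
    exact hK.eq_of_kernelEnergy_le μ ν (le_of_mul_le_mul_left (by linarith) hr)

lemma comp_measurableEmbedding (hK : IsStrictPosDefKernel K) {φ : Y → X}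
    (hφ : MeasurableEmbedding φ) : IsStrictPosDefKernel fun x y ↦ K (φ x) (φ y) where
  symm x y := hK.symm (φ x) (φ y)
  two_mul_kernelEnergy_le μ ν _ _ := by
    simpa only [kernelEnergy_map hφ] using hK.two_mul_kernelEnergy_le (μ.map φ) (ν.map φ)
  eq_of_kernelEnergy_le μ ν _ _ hle := by
    simp only [← kernelEnergy_map hφ] at hle
    rw [← hφ.comap_map μ, hK.eq_of_kernelEnergy_le _ _ hle, hφ.comap_map]

end IsStrictPosDefKernel

lemma integral_withDensity_ofReal {w : X → ℝ} (hw : Measurable w) (hw_nonneg : ∀ x, 0 ≤ w x)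
    (μ : Measure X) (f : X → ℝ) :
    ∫ x, f x ∂μ.withDensity (fun x ↦ .ofReal (w x)) = ∫ x, w x * f x ∂μ := by
  rw [integral_withDensity_eq_integral_toReal_smul hw.ennreal_ofReal (by simp)]
  simp only [ENNReal.toReal_ofReal (hw_nonneg _), smul_eq_mul]

lemma kernelEnergy_withDensity_ofReal {w : X → ℝ} (hw : Measurable w) (hw_nonneg : ∀ x, 0 ≤ w x)
    (K : X → X → ℝ) (μ : Measure X) :
    kernelEnergy K (μ.withDensity fun x ↦ .ofReal (w x)) (μ.withDensity fun x ↦ .ofReal (w x)) =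
      kernelEnergy (fun x y ↦ w x * w y * K x y) μ μ := by
  simp only [kernelEnergy, kernelPotential, integral_withDensity_ofReal hw hw_nonneg,
    ← integral_const_mul]
  congr! 4
  ring

lemma kernelEnergy_of_kernelPotential_eq {K : X → X → ℝ} {σ : Measure X} {c : ℝ}
    (hσ : ∀ x, kernelPotential K σ x = c) (ν : Measure X) :
    kernelEnergy K σ ν = ν.real Set.univ * c := by
  simp only [kernelEnergy, hσ, integral_const, smul_eq_mul]

end KernelEnergy

section LogInequality

variable {Ω : Type*} [MeasurableSpace Ω] {P : Measure Ω} [IsProbabilityMeasure P] {w : Ω → ℝ}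

lemma integral_log_le_integral_sub_one (hw_pos : ∀ ω, 0 < w ω) (hw : Integrable w P)
    (hlog : Integrable (fun ω ↦ log (w ω)) P) :
    ∫ ω, log (w ω) ∂P ≤ ∫ ω, w ω ∂P - 1 := by
  calc ∫ ω, log (w ω) ∂P ≤ ∫ ω, (w ω - 1) ∂P :=
        integral_mono hlog (hw.sub (integrable_const 1)) fun ω ↦ log_le_sub_one_of_pos (hw_pos ω)
    _ = ∫ ω, w ω ∂P - 1 := by simp [integral_sub hw (integrable_const 1)]

lemma ae_eq_one_of_integral_sub_one_le_integral_log (hw_pos : ∀ ω, 0 < w ω) (hw : Integrable w P)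
    (hlog : Integrable (fun ω ↦ log (w ω)) P) (hle : ∫ ω, w ω ∂P - 1 ≤ ∫ ω, log (w ω) ∂P) :
    w =ᵐ[P] 1 := by
  have hw_sub : Integrable (fun ω ↦ w ω - 1) P := hw.sub (integrable_const 1)
  have integral_eq : ∫ ω, log (w ω) ∂P = ∫ ω, (w ω - 1) ∂P := by
    rw [integral_sub hw (integrable_const 1), integral_const, probReal_univ, one_smul]
    exact (integral_log_le_integral_sub_one hw_pos hw hlog).antisymm hle
  have log_eq := (integral_eq_iff_of_ae_le hlog hw_sub
    (.of_forall fun ω ↦ log_le_sub_one_of_pos (hw_pos ω))).mp integral_eq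
  filter_upwards [log_eq] with ω hω
  by_contra hne
  exact (log_lt_sub_one_of_pos (hw_pos ω) hne).ne hω

end LogInequality

section CompactKernel

variable {X : Type*} [TopologicalSpace X] [CompactSpace X] [MeasurableSpace X]
  [OpensMeasurableSpace X]

lemma integrable_of_continuous_of_compactSpace {f : X → ℝ} (hf : Continuous f) (μ : Measure X)
    [IsFiniteMeasure μ] : Integrable f μ :=
  hf.integrable_of_hasCompactSupport (.of_compactSpace f)

lemma kernelPotential_pos {K : X → X → ℝ} (hK : Continuous (Function.uncurry K))
    (hK_pos : ∀ x y, 0 < K x y) (μ : Measure X) [IsFiniteMeasure μ] [NeZero μ] (x : X) :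
    0 < kernelPotential K μ x := by
  have hKx : Integrable (fun y ↦ K y x) μ :=
    integrable_of_continuous_of_compactSpace (by fun_prop) μ
  rw [kernelPotential, integral_pos_iff_support_of_nonneg (fun y ↦ (hK_pos y x).le) hKx]
  have support_eq : Function.support (fun y ↦ K y x) = Set.univ :=
    Set.eq_univ_of_forall fun y ↦ (hK_pos y x).ne'
  simp [support_eq, pos_iff_ne_zero, NeZero.ne]

lemma pos_of_kernelPotential_eq {K : X → X → ℝ} (hK : Continuous (Function.uncurry K))
    (hK_pos : ∀ x y, 0 < K x y) {σ : Measure X} [IsProbabilityMeasure σ] {c : ℝ}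
    (hσ : ∀ x, kernelPotential K σ x = c) : 0 < c := by
  obtain ⟨x⟩ := nonempty_of_isProbabilityMeasure σ
  exact hσ x ▸ kernelPotential_pos hK hK_pos σ x

lemma kernelEnergy_flip {K : X → X → ℝ} (hK : Continuous (Function.uncurry K)) (μ ν : Measure X)
    [IsFiniteMeasure μ] [IsFiniteMeasure ν] :
    kernelEnergy (fun x y ↦ K y x) μ ν = kernelEnergy K ν μ :=
  integral_integral_swap_of_hasCompactSupport hK (.of_compactSpace _)

variable [FirstCountableTopology X] [R1Space X] {K L : X → X → ℝ} {μ ν : Measure X}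
  [IsFiniteMeasure μ] [IsFiniteMeasure ν]

lemma continuous_kernelPotential (hK : Continuous (Function.uncurry K)) (μ : Measure X)
    [IsFiniteMeasure μ] : Continuous (kernelPotential K μ) := by
  have continuous_setIntegral := continuous_parametric_integral_of_continuous (μ := μ)
    (s := Set.univ) (f := fun x y ↦ K y x) (by fun_prop) isCompact_univ
  simp only [Measure.restrict_univ] at continuous_setIntegral
  exact continuous_setIntegral

lemma integrable_kernelPotential (hK : Continuous (Function.uncurry K)) (μ ν : Measure X)
    [IsFiniteMeasure μ] [IsFiniteMeasure ν] : Integrable (kernelPotential K μ) ν :=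
  integrable_of_continuous_of_compactSpace (continuous_kernelPotential hK μ) ν

lemma kernelEnergy_mono (hK : Continuous (Function.uncurry K))
    (hL : Continuous (Function.uncurry L)) (hKL : ∀ x y, K x y ≤ L x y) :
    kernelEnergy K μ ν ≤ kernelEnergy L μ ν :=
  integral_mono (integrable_kernelPotential hK μ ν) (integrable_kernelPotential hL μ ν) fun x ↦
    integral_mono (integrable_of_continuous_of_compactSpace (by fun_prop) μ)
      (integrable_of_continuous_of_compactSpace (by fun_prop) μ) fun y ↦ hKL y x

lemma kernelEnergy_add (hK : Continuous (Function.uncurry K))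
    (hL : Continuous (Function.uncurry L)) :
    kernelEnergy (fun x y ↦ K x y + L x y) μ ν = kernelEnergy K μ ν + kernelEnergy L μ ν := by
  have potential_add (x : X) : kernelPotential (fun x y ↦ K x y + L x y) μ x =
      kernelPotential K μ x + kernelPotential L μ x :=
    integral_add (integrable_of_continuous_of_compactSpace (by fun_prop) μ)
      (integrable_of_continuous_of_compactSpace (by fun_prop) μ)
  simp only [kernelEnergy, potential_add]
  exact integral_add (integrable_kernelPotential hK μ ν) (integrable_kernelPotential hL μ ν)

/-- Schur's test: by AM-GM `2 * w x * w y ≤ w x ^ 2 + w y ^ 2`, and both squares contribute the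
same amount by symmetry. -/
lemma kernelEnergy_mul_mul_le (hK : Continuous (Function.uncurry K))
    (hK_nonneg : ∀ x y, 0 ≤ K x y) (hK_symm : ∀ x y, K x y = K y x) {w : X → ℝ}
    (hw : Continuous w) :
    kernelEnergy (fun x y ↦ w x * w y * K x y) μ μ ≤ ∫ x, w x ^ 2 * kernelPotential K μ x ∂μ := by
  let A : X → X → ℝ := fun x y ↦ w y ^ 2 * K x y
  have hA : Continuous (Function.uncurry A) := by fun_prop
  have am_gm (x y : X) : 2 * (w x * w y * K x y) ≤ A x y + A y x := by
    simp only [A, hK_symm y x]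
    nlinarith [mul_nonneg (hK_nonneg x y) (sq_nonneg (w x - w y))]
  have energy_A : kernelEnergy A μ μ = ∫ x, w x ^ 2 * kernelPotential K μ x ∂μ := by
    simp only [kernelEnergy, kernelPotential, A, integral_const_mul]
  have energy_le := kernelEnergy_mono (μ := μ) (ν := μ) (by fun_prop) (by fun_prop) am_gm
  rw [kernelEnergy_const_mul, kernelEnergy_add hA (by fun_prop), kernelEnergy_flip hA μ μ,
    energy_A] at energy_le
  linarith

end CompactKernel

section LeveledMeasure

variable {X : Type*} [MeasurableSpace X]

/-- The density `w = √(c / U)`, where `U` is the potential of `μ`; it is chosen so that `w² U` is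
the constant `c`. -/
def levelingDensity (K : X → X → ℝ) (μ : Measure X) (c : ℝ) (x : X) : ℝ :=
  √(c / kernelPotential K μ x)

/-- The reweighting of `μ` by `√(c / U)`, where `U` is the potential of `μ`. Its energy is at
most `c`, so it can be compared with a measure of constant potential `c`. -/
def leveledMeasure (K : X → X → ℝ) (μ : Measure X) (c : ℝ) : Measure X :=
  μ.withDensity fun x ↦ .ofReal (levelingDensity K μ c x)

variable [TopologicalSpace X] [CompactSpace X] [OpensMeasurableSpace X] {K : X → X → ℝ} {c : ℝ}
  {μ : Measure X} [IsProbabilityMeasure μ]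

lemma levelingDensity_pos (hK : Continuous (Function.uncurry K)) (hK_pos : ∀ x y, 0 < K x y)
    (hc : 0 < c) (x : X) : 0 < levelingDensity K μ c x :=
  sqrt_pos.mpr (div_pos hc (kernelPotential_pos hK hK_pos μ x))

lemma log_kernelPotential_eq (hK : Continuous (Function.uncurry K)) (hK_pos : ∀ x y, 0 < K x y)
    (hc : 0 < c) (x : X) :
    log (kernelPotential K μ x) = log c - 2 * log (levelingDensity K μ c x) := by
  have hU := kernelPotential_pos hK hK_pos μ x
  rw [levelingDensity, log_sqrt (by positivity), log_div hc.ne' hU.ne']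
  ring

variable [FirstCountableTopology X] [R1Space X]

lemma continuous_levelingDensity (hK : Continuous (Function.uncurry K))
    (hK_pos : ∀ x y, 0 < K x y) : Continuous (levelingDensity K μ c) :=
  (continuous_const.div (continuous_kernelPotential hK μ)
    fun x ↦ (kernelPotential_pos hK hK_pos μ x).ne').sqrt

lemma integrable_levelingDensity (hK : Continuous (Function.uncurry K))
    (hK_pos : ∀ x y, 0 < K x y) : Integrable (levelingDensity K μ c) μ :=
  integrable_of_continuous_of_compactSpace (continuous_levelingDensity hK hK_pos) μ

lemma integrable_log_levelingDensity (hK : Continuous (Function.uncurry K))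
    (hK_pos : ∀ x y, 0 < K x y) (hc : 0 < c) :
    Integrable (fun x ↦ log (levelingDensity K μ c x)) μ :=
  integrable_of_continuous_of_compactSpace ((continuous_levelingDensity hK hK_pos).log
    fun x ↦ (levelingDensity_pos hK hK_pos hc x).ne') μ

lemma isFiniteMeasure_leveledMeasure (hK : Continuous (Function.uncurry K))
    (hK_pos : ∀ x y, 0 < K x y) : IsFiniteMeasure (leveledMeasure K μ c) :=
  isFiniteMeasure_withDensity_ofReal (integrable_levelingDensity hK hK_pos).2

lemma leveledMeasure_real_univ (hK : Continuous (Function.uncurry K))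
    (hK_pos : ∀ x y, 0 < K x y) :
    (leveledMeasure K μ c).real Set.univ = ∫ x, levelingDensity K μ c x ∂μ := by
  have hw := continuous_levelingDensity (μ := μ) (c := c) hK hK_pos
  simpa [leveledMeasure] using
    integral_withDensity_ofReal hw.measurable (fun _ ↦ sqrt_nonneg _) μ fun _ ↦ 1

lemma kernelEnergy_leveledMeasure_le (hK : Continuous (Function.uncurry K))
    (hK_pos : ∀ x y, 0 < K x y) (hK_symm : ∀ x y, K x y = K y x) (hc : 0 ≤ c) :
    kernelEnergy K (leveledMeasure K μ c) (leveledMeasure K μ c) ≤ c := by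
  have hw := continuous_levelingDensity (μ := μ) (c := c) hK hK_pos
  have sq_mul_potential (x : X) : levelingDensity K μ c x ^ 2 * kernelPotential K μ x = c := by
    have hU := kernelPotential_pos hK hK_pos μ x
    rw [levelingDensity, sq_sqrt (by positivity), div_mul_cancel₀ _ hU.ne']
  rw [leveledMeasure, kernelEnergy_withDensity_ofReal hw.measurable fun _ ↦ sqrt_nonneg _]
  calc _ ≤ ∫ x, levelingDensity K μ c x ^ 2 * kernelPotential K μ x ∂μ :=
        kernelEnergy_mul_mul_le hK (fun x y ↦ (hK_pos x y).le) hK_symm hw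
    _ = c := by simp only [sq_mul_potential, integral_const, probReal_univ, one_smul]

end LeveledMeasure

section Equilibrium

variable {X : Type*} [TopologicalSpace X] [CompactSpace X] [FirstCountableTopology X] [R1Space X]
  [MeasurableSpace X] [OpensMeasurableSpace X] {K : X → X → ℝ} {c : ℝ}
  {μ σ : Measure X} [IsProbabilityMeasure μ] [IsProbabilityMeasure σ]

lemma integral_levelingDensity_le_one (hK : Continuous (Function.uncurry K))
    (hK_pos : ∀ x y, 0 < K x y) (hK_pd : IsStrictPosDefKernel K)
    (hσ : ∀ x, kernelPotential K σ x = c) : ∫ x, levelingDensity K μ c x ∂μ ≤ 1 := by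
  have hc : 0 < c := pos_of_kernelPotential_eq hK hK_pos hσ
  have : IsFiniteMeasure (leveledMeasure K μ c) := isFiniteMeasure_leveledMeasure hK hK_pos
  have energy_le := hK_pd.two_mul_kernelEnergy_le σ (leveledMeasure K μ c)
  rw [kernelEnergy_of_kernelPotential_eq hσ, kernelEnergy_of_kernelPotential_eq hσ,
    leveledMeasure_real_univ hK hK_pos, probReal_univ] at energy_le
  have := kernelEnergy_leveledMeasure_le (μ := μ) hK hK_pos hK_pd.symm hc.le
  exact le_of_mul_le_mul_right (by linarith) hc

lemma leveledMeasure_eq_of_one_le_integral (hK : Continuous (Function.uncurry K))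
    (hK_pos : ∀ x y, 0 < K x y) (hK_pd : IsStrictPosDefKernel K)
    (hσ : ∀ x, kernelPotential K σ x = c) (one_le : 1 ≤ ∫ x, levelingDensity K μ c x ∂μ) :
    leveledMeasure K μ c = σ := by
  have hc : 0 < c := pos_of_kernelPotential_eq hK hK_pos hσ
  have : IsFiniteMeasure (leveledMeasure K μ c) := isFiniteMeasure_leveledMeasure hK hK_pos
  refine (hK_pd.eq_of_kernelEnergy_le σ _ ?_).symm
  rw [kernelEnergy_of_kernelPotential_eq hσ, kernelEnergy_of_kernelPotential_eq hσ,
    leveledMeasure_real_univ hK hK_pos, probReal_univ]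
  nlinarith [kernelEnergy_leveledMeasure_le (μ := μ) hK hK_pos hK_pd.symm hc.le]

lemma integral_log_kernelPotential_eq (hK : Continuous (Function.uncurry K))
    (hK_pos : ∀ x y, 0 < K x y) (hc : 0 < c) :
    ∫ x, log (kernelPotential K μ x) ∂μ =
      log c - 2 * ∫ x, log (levelingDensity K μ c x) ∂μ := by
  simp only [log_kernelPotential_eq hK hK_pos hc]
  rw [integral_sub (integrable_const _) ((integrable_log_levelingDensity hK hK_pos hc).const_mul 2),
    integral_const_mul, integral_const, probReal_univ, one_smul]

theorem log_le_integral_log_kernelPotential (hK : Continuous (Function.uncurry K))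
    (hK_pos : ∀ x y, 0 < K x y) (hK_pd : IsStrictPosDefKernel K)
    (hσ : ∀ x, kernelPotential K σ x = c) :
    log c ≤ ∫ x, log (kernelPotential K μ x) ∂μ := by
  have hc : 0 < c := pos_of_kernelPotential_eq hK hK_pos hσ
  have log_le := integral_log_le_integral_sub_one (levelingDensity_pos (μ := μ) hK hK_pos hc)
    (integrable_levelingDensity hK hK_pos) (integrable_log_levelingDensity hK hK_pos hc)
  have le_one := integral_levelingDensity_le_one (μ := μ) hK hK_pos hK_pd hσ
  rw [integral_log_kernelPotential_eq hK hK_pos hc]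
  linarith

theorem eq_of_integral_log_kernelPotential_le (hK : Continuous (Function.uncurry K))
    (hK_pos : ∀ x y, 0 < K x y) (hK_pd : IsStrictPosDefKernel K)
    (hσ : ∀ x, kernelPotential K σ x = c)
    (hle : ∫ x, log (kernelPotential K μ x) ∂μ ≤ log c) : μ = σ := by
  have hc : 0 < c := pos_of_kernelPotential_eq hK hK_pos hσ
  have hw_pos := levelingDensity_pos (μ := μ) hK hK_pos hc
  have hw := integrable_levelingDensity (μ := μ) (c := c) hK hK_pos
  have hlog := integrable_log_levelingDensity (μ := μ) hK hK_pos hc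
  have log_le := integral_log_le_integral_sub_one hw_pos hw hlog
  have le_one := integral_levelingDensity_le_one (μ := μ) hK hK_pos hK_pd hσ
  rw [integral_log_kernelPotential_eq hK hK_pos hc] at hle
  have density_eq_one : levelingDensity K μ c =ᵐ[μ] 1 :=
    ae_eq_one_of_integral_sub_one_le_integral_log hw_pos hw hlog (by linarith)
  calc μ = μ.withDensity 1 := withDensity_one.symm
    _ = leveledMeasure K μ c := withDensity_congr_ae <| by
        filter_upwards [density_eq_one] with x hx
        simp [hx]
    _ = σ := leveledMeasure_eq_of_one_le_integral hK hK_pos hK_pd hσ (by linarith)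

end Equilibrium

section LogPotentialRisk

variable {Ω X : Type*} [MeasurableSpace Ω] {P : Measure Ω}

/-- The expected log-potential `E_ω[log E_ω'[K(g ω', g ω)]]` of the encoder `g : Ω → X` under the
data distribution `P`. -/
def logPotentialRisk (K : X → X → ℝ) (P : Measure Ω) (g : Ω → X) : ℝ :=
  ∫ ω, log (∫ ω', K (g ω') (g ω) ∂P) ∂P

variable [TopologicalSpace X] [CompactSpace X] [FirstCountableTopology X] [R1Space X]
  [MeasurableSpace X] [OpensMeasurableSpace X] {K : X → X → ℝ}
  [IsProbabilityMeasure P] {σ : Measure X} {g : Ω → X}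

lemma logPotentialRisk_eq_integral_map (hK : Continuous (Function.uncurry K)) (hg : Measurable g) :
    logPotentialRisk K P g = ∫ x, log (kernelPotential K (P.map g) x) ∂P.map g := by
  have inner_eq (x : X) : kernelPotential K (P.map g) x = ∫ ω, K (g ω) x ∂P :=
    integral_map hg.aemeasurable
      (Continuous.measurable (f := fun y ↦ K y x) (by fun_prop)).aestronglyMeasurable
  have hlog : Measurable fun x ↦ log (kernelPotential K (P.map g) x) :=
    (continuous_kernelPotential hK _).measurable.log
  rw [integral_map hg.aemeasurable hlog.aestronglyMeasurable]
  simp only [inner_eq, logPotentialRisk]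

theorem forall_logPotentialRisk_le_iff_map_eq (hK : Continuous (Function.uncurry K))
    (hK_pos : ∀ x y, 0 < K x y) (hK_pd : IsStrictPosDefKernel K)
    (hσ : ∀ x y, kernelPotential K σ x = kernelPotential K σ y)
    (hex : ∃ f : Ω → X, Measurable f ∧ P.map f = σ) (hg : Measurable g) :
    (∀ h : Ω → X, Measurable h → logPotentialRisk K P g ≤ logPotentialRisk K P h) ↔
      P.map g = σ := by
  obtain ⟨f, hf, rfl⟩ := hex
  have isProbabilityMeasure_map {h : Ω → X} (hh : Measurable h) : IsProbabilityMeasure (P.map h) :=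
    Measure.isProbabilityMeasure_map hh.aemeasurable
  have := isProbabilityMeasure_map hf
  have := isProbabilityMeasure_map hg
  obtain ⟨x₀⟩ := nonempty_of_isProbabilityMeasure (P.map f)
  have risk_f : logPotentialRisk K P f = log (kernelPotential K (P.map f) x₀) := by
    simp only [logPotentialRisk_eq_integral_map hK hf, hσ _ x₀, integral_const, probReal_univ,
      one_smul]
  constructor
  · intro hmin
    refine eq_of_integral_log_kernelPotential_le hK hK_pos hK_pd (hσ · x₀) ?_
    rw [← risk_f, ← logPotentialRisk_eq_integral_map hK hg]
    exact hmin f hf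
  · intro hgf h hh
    have := isProbabilityMeasure_map hh
    rw [logPotentialRisk_eq_integral_map hK hg, hgf, ← logPotentialRisk_eq_integral_map hK hf,
      risk_f, logPotentialRisk_eq_integral_map hK hh]
    exact log_le_integral_log_kernelPotential hK hK_pos hK_pd (hσ · x₀)

end LogPotentialRisk

section CharFunKernel

open ComplexConjugate

variable {E : Type*} [NormedAddCommGroup E] [InnerProductSpace ℝ E] [MeasurableSpace E]

/-- The translation-invariant kernel whose profile is the (real part of the) characteristic
function of `γ`. -/
def charFunKernel (γ : Measure E) (x y : E) : ℝ :=
  (charFun γ (x - y)).re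

lemma charFunKernel_comm (γ : Measure E) (x y : E) : charFunKernel γ x y = charFunKernel γ y x := by
  rw [charFunKernel, ← neg_sub, charFun_neg, Complex.conj_re, charFunKernel]

variable [BorelSpace E]

lemma charFun_map_neg (μ : Measure E) (t : E) : charFun (μ.map Neg.neg) t = conj (charFun μ t) := by
  simpa [charFun_neg] using charFun_map_smul (μ := μ) (-1) t

variable [SecondCountableTopology E]

lemma integrable_charFun (γ μ : Measure E) [IsFiniteMeasure γ] [IsFiniteMeasure μ] :
    Integrable (charFun γ) μ :=
  .of_bound measurable_charFun.aestronglyMeasurable (γ.real Set.univ)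
    (.of_forall norm_charFun_le)

lemma integral_charFun_comm (γ μ : Measure E) [IsFiniteMeasure γ] [IsFiniteMeasure μ] :
    ∫ x, charFun γ x ∂μ = ∫ t, charFun μ t ∂γ := by
  have integrable_exp : Integrable
      (Function.uncurry fun x t : E ↦ Complex.exp ((⟪t, x⟫ : ℝ) * Complex.I)) (μ.prod γ) :=
    .of_bound (Continuous.aestronglyMeasurable (by fun_prop)) 1 (.of_forall fun _ ↦
      (Complex.norm_exp_ofReal_mul_I _).le)
  simp only [charFun_apply]
  rw [integral_integral_swap integrable_exp]
  simp only [real_inner_comm]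

/-- The double integral is the integral of `charFun γ` against the distribution of `y - x`, so
integrating over `γ` last turns it into the product of the characteristic functions. -/
lemma kernelEnergy_charFunKernel (γ μ ν : Measure E) [IsFiniteMeasure γ] [IsFiniteMeasure μ]
    [IsFiniteMeasure ν] :
    kernelEnergy (charFunKernel γ) μ ν = ∫ t, (conj (charFun ν t) * charFun μ t).re ∂γ := by
  have neg_embedding : MeasurableEmbedding (Neg.neg : E → E) :=
    (Homeomorph.neg E).measurableEmbedding
  calc kernelEnergy (charFunKernel γ) μ ν
      = ∫ x, ∫ y, (charFun γ (x + y)).re ∂μ ∂ν.map Neg.neg := by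
        rw [neg_embedding.integral_map]
        simp only [kernelEnergy, kernelPotential, charFunKernel, neg_add_eq_sub]
    _ = ∫ z, (charFun γ z).re ∂(ν.map Neg.neg ∗ μ) :=
        (integral_conv (integrable_charFun γ _).re).symm
    _ = (∫ z, charFun γ z ∂(ν.map Neg.neg ∗ μ)).re := integral_re (integrable_charFun γ _)
    _ = (∫ t, charFun (ν.map Neg.neg ∗ μ) t ∂γ).re := by rw [integral_charFun_comm]
    _ = ∫ t, (charFun (ν.map Neg.neg ∗ μ) t).re ∂γ := (integral_re (integrable_charFun _ γ)).symm
    _ = ∫ t, (conj (charFun ν t) * charFun μ t).re ∂γ := by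
        simp only [charFun_conv, charFun_map_neg]

lemma integrable_conj_charFun_mul_charFun_re (γ μ ν : Measure E) [IsFiniteMeasure γ]
    [IsFiniteMeasure μ] [IsFiniteMeasure ν] :
    Integrable (fun t ↦ (conj (charFun ν t) * charFun μ t).re) γ := by
  simpa only [charFun_conv, charFun_map_neg] using! (integrable_charFun (ν.map Neg.neg ∗ μ) γ).re

lemma kernelEnergy_charFunKernel_sub (γ μ ν : Measure E) [IsFiniteMeasure γ] [IsFiniteMeasure μ]
    [IsFiniteMeasure ν] :
    kernelEnergy (charFunKernel γ) μ μ + kernelEnergy (charFunKernel γ) ν ν -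
      2 * kernelEnergy (charFunKernel γ) μ ν = ∫ t, ‖charFun μ t - charFun ν t‖ ^ 2 ∂γ := by
  have hint := integrable_conj_charFun_mul_charFun_re γ
  have hsum : Integrable (fun t ↦ (conj (charFun μ t) * charFun μ t).re +
      (conj (charFun ν t) * charFun ν t).re) γ := (hint μ μ).add (hint ν ν)
  simp only [kernelEnergy_charFunKernel]
  rw [← integral_const_mul, ← integral_add (hint μ μ) (hint ν ν),
    ← integral_sub hsum ((hint μ ν).const_mul 2)]
  congr! 2 with t
  simp only [Complex.sq_norm, Complex.normSq_apply, Complex.mul_re, Complex.sub_re, Complex.sub_im,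
    Complex.conj_re, Complex.conj_im]
  ring

lemma integrable_norm_charFun_sub_sq (γ μ ν : Measure E) [IsFiniteMeasure γ] [IsFiniteMeasure μ]
    [IsFiniteMeasure ν] : Integrable (fun t ↦ ‖charFun μ t - charFun ν t‖ ^ 2) γ := by
  refine .of_bound (by fun_prop) ((μ.real Set.univ + ν.real Set.univ) ^ 2) (.of_forall fun t ↦ ?_)
  rw [norm_pow, norm_norm]
  gcongr
  exact (norm_sub_le _ _).trans (add_le_add (norm_charFun_le t) (norm_charFun_le t))

theorem isStrictPosDefKernel_charFunKernel [CompleteSpace E] (γ : Measure E) [IsFiniteMeasure γ]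
    [γ.IsOpenPosMeasure] : IsStrictPosDefKernel (charFunKernel γ) where
  symm := charFunKernel_comm γ
  two_mul_kernelEnergy_le μ ν _ _ := by
    have : 0 ≤ ∫ t, ‖charFun μ t - charFun ν t‖ ^ 2 ∂γ := integral_nonneg fun t ↦ by positivity
    linarith [kernelEnergy_charFunKernel_sub γ μ ν]
  eq_of_kernelEnergy_le μ ν _ _ hle := by
    have integral_nonpos : ∫ t, ‖charFun μ t - charFun ν t‖ ^ 2 ∂γ ≤ 0 := by
      linarith [kernelEnergy_charFunKernel_sub γ μ ν]
    have charFun_ae_eq : charFun μ =ᵐ[γ] charFun ν := by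
      have integral_eq_zero := integral_nonpos.antisymm (integral_nonneg fun t ↦ by positivity)
      rw [integral_eq_zero_iff_of_nonneg (fun t ↦ by positivity)
        (integrable_norm_charFun_sub_sq γ μ ν)] at integral_eq_zero
      filter_upwards [integral_eq_zero] with t ht
      simpa [sub_eq_zero] using ht
    exact Measure.ext_of_charFun
      ((continuous_charFun.ae_eq_iff_eq γ continuous_charFun).mp charFun_ae_eq)

end CharFunKernel

section GaussianKernel

open ProbabilityTheory

variable {E : Type*} [NormedAddCommGroup E] [InnerProductSpace ℝ E] [FiniteDimensional ℝ E]
  [MeasurableSpace E] [BorelSpace E]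

lemma isOpenPosMeasure_gaussianReal (μ : ℝ) {v : NNReal} (hv : v ≠ 0) :
    (gaussianReal μ v).IsOpenPosMeasure :=
  (gaussianReal_absolutelyContinuous' μ hv).isOpenPosMeasure

instance isOpenPosMeasure_stdGaussian : (stdGaussian E).IsOpenPosMeasure := by
  have (_ : Fin (Module.finrank ℝ E)) : (gaussianReal 0 1).IsOpenPosMeasure :=
    isOpenPosMeasure_gaussianReal 0 one_ne_zero
  refine Continuous.isOpenPosMeasure_map (by fun_prop) fun x ↦ ?_
  exact ⟨_, (stdOrthonormalBasis ℝ E).sum_repr x⟩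

lemma charFunKernel_stdGaussian (x y : E) :
    charFunKernel (stdGaussian E) x y = exp (-‖x - y‖ ^ 2 / 2) := by
  rw [charFunKernel, charFun_stdGaussian]
  exact_mod_cast Complex.ofReal_re _

end GaussianKernel

section SphereKernel

open ProbabilityTheory

variable {E : Type*} [NormedAddCommGroup E] [InnerProductSpace ℝ E]

/-- The kernel `exp(⟨x, y⟩ / τ)` on the unit sphere, with temperature `τ`. -/
def expKernel (τ : ℝ) (x y : sphere (0 : E) 1) : ℝ :=
  exp (⟪(x : E), (y : E)⟫ / τ)

lemma continuous_uncurry_expKernel (τ : ℝ) :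
    Continuous (Function.uncurry (expKernel (E := E) τ)) := by
  unfold Function.uncurry expKernel
  fun_prop

variable [FiniteDimensional ℝ E] [MeasurableSpace E] [BorelSpace E]

/-- On the unit sphere `⟨x, y⟩ = 1 - ‖x - y‖² / 2`. -/
lemma expKernel_eq_charFunKernel {τ : ℝ} (hτ : 0 < τ) (x y : sphere (0 : E) 1) :
    expKernel τ x y =
      exp (1 / τ) * charFunKernel (stdGaussian E) ((√τ)⁻¹ • (x : E)) ((√τ)⁻¹ • (y : E)) := by
  rw [charFunKernel_stdGaussian, ← exp_add, expKernel, ← smul_sub, norm_smul, mul_pow,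
    norm_sub_sq_real, norm_eq_of_mem_sphere, norm_eq_of_mem_sphere, norm_inv, inv_pow,
    norm_of_nonneg (sqrt_nonneg τ), sq_sqrt hτ.le]
  congr 1
  field_simp
  ring

theorem isStrictPosDefKernel_expKernel {τ : ℝ} (hτ : 0 < τ) :
    IsStrictPosDefKernel (expKernel (E := E) τ) := by
  have hφ : MeasurableEmbedding fun x : sphere (0 : E) 1 ↦ (√τ)⁻¹ • (x : E) :=
    (measurableEmbedding_const_smul₀ (inv_ne_zero (sqrt_pos.mpr hτ).ne')).comp
      (.subtype_coe isClosed_sphere.measurableSet)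
  have := ((isStrictPosDefKernel_charFunKernel (stdGaussian E)).comp_measurableEmbedding
    hφ).const_mul (exp_pos (1 / τ))
  simpa only [← expKernel_eq_charFunKernel hτ] using this

end SphereKernel

section UniformSphereMeasure

open Pointwise

variable {E F : Type*} [NormedAddCommGroup E] [InnerProductSpace ℝ E]
  [NormedAddCommGroup F] [InnerProductSpace ℝ F]

/-- The map between unit spheres induced by a linear isometry. -/
def sphereMap (R : E ≃ₗᵢ[ℝ] F) (x : sphere (0 : E) 1) : sphere (0 : F) 1 :=
  ⟨R x, by simp⟩

lemma exists_sphereMap_eq (x y : sphere (0 : E) 1) : ∃ R : E ≃ₗᵢ[ℝ] E, sphereMap R x = y :=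
  ⟨(ℝ ∙ ((x : E) - y))ᗮ.reflection, Subtype.ext (Submodule.reflection_sub (by simp))⟩

lemma expKernel_sphereMap (τ : ℝ) (R : E ≃ₗᵢ[ℝ] F) (x y : sphere (0 : E) 1) :
    expKernel τ (sphereMap R x) (sphereMap R y) = expKernel τ x y := by
  simp only [expKernel, sphereMap, R.inner_map_map]

lemma continuous_sphereMap (R : E ≃ₗᵢ[ℝ] F) : Continuous (sphereMap R) :=
  (R.continuous.comp continuous_subtype_val).subtype_mk _

lemma Ioo_smul_image_sphereMap_preimage (R : E ≃ₗᵢ[ℝ] F) (s : Set (sphere (0 : F) 1)) :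
    Set.Ioo (0 : ℝ) 1 • (Subtype.val '' (sphereMap R ⁻¹' s)) =
      R ⁻¹' (Set.Ioo (0 : ℝ) 1 • (Subtype.val '' s)) := by
  ext v
  constructor
  · rintro ⟨r, hr, _, ⟨x, hx, rfl⟩, rfl⟩
    exact ⟨r, hr, R x, ⟨sphereMap R x, hx, rfl⟩, (map_smul R r (x : E)).symm⟩
  · rintro ⟨r, hr, _, ⟨y, hy, rfl⟩, hv⟩
    have sphereMap_symm : sphereMap R (sphereMap R.symm y) = y :=
      Subtype.ext (R.apply_symm_apply y)
    refine ⟨r, hr, R.symm y, ⟨sphereMap R.symm y, ?_, rfl⟩, R.injective ?_⟩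
    · rwa [Set.mem_preimage, sphereMap_symm]
    · rw [← hv]
      simp only [map_smul, R.apply_symm_apply]

variable [MeasurableSpace E] [BorelSpace E] [MeasurableSpace F] [BorelSpace F]

lemma measurePreserving_sphereMap (R : E ≃ₗᵢ[ℝ] F) {μ : Measure E} {ν : Measure F}
    (hR : MeasurePreserving R μ ν) :
    MeasurePreserving (sphereMap R) μ.toSphere ν.toSphere := by
  have hmeas : Measurable (sphereMap R) := (continuous_sphereMap R).measurable
  refine ⟨hmeas, Measure.ext fun s hs ↦ ?_⟩
  rw [Measure.map_apply hmeas hs, Measure.toSphere_apply' _ (hmeas hs),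
    Measure.toSphere_apply' _ hs, Ioo_smul_image_sphereMap_preimage,
    R.toLinearEquiv.finrank_eq]
  congr 1
  exact hR.measure_preimage_equiv (f := R.toMeasurableEquiv) _

variable [FiniteDimensional ℝ E]

variable (E) in
/-- The uniform probability measure on the unit sphere of `E`, i.e. the normalized surface
measure. It is the zero measure when the sphere is empty. -/
def uniformSphereMeasure : Measure (sphere (0 : E) 1) :=
  ((volume : Measure E).toSphere Set.univ)⁻¹ • (volume : Measure E).toSphere

lemma measurePreserving_sphereMap_uniformSphereMeasure (R : E ≃ₗᵢ[ℝ] E) :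
    MeasurePreserving (sphereMap R) (uniformSphereMeasure E) (uniformSphereMeasure E) :=
  (measurePreserving_sphereMap R R.measurePreserving).smul_measure _

lemma kernelPotential_uniformSphereMeasure (τ : ℝ) (x y : sphere (0 : E) 1) :
    kernelPotential (expKernel τ) (uniformSphereMeasure E) x =
      kernelPotential (expKernel τ) (uniformSphereMeasure E) y := by
  obtain ⟨R, rfl⟩ := exists_sphereMap_eq x y
  have hR := measurePreserving_sphereMap_uniformSphereMeasure R
  have hK : Continuous fun z ↦ expKernel τ z (sphereMap R x) :=
    (continuous_uncurry_expKernel τ).comp (.prodMk_left _)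
  calc ∫ y, expKernel τ y x ∂uniformSphereMeasure E
      = ∫ y, expKernel τ (sphereMap R y) (sphereMap R x) ∂uniformSphereMeasure E := by
        simp only [expKernel_sphereMap]
    _ = ∫ z, expKernel τ z (sphereMap R x) ∂(uniformSphereMeasure E).map (sphereMap R) :=
        (integral_map hR.aemeasurable hK.aestronglyMeasurable).symm
    _ = ∫ z, expKernel τ z (sphereMap R x) ∂uniformSphereMeasure E := by rw [hR.map_eq]

end UniformSphereMeasure

theorem unifTerm_minimizers_iff_perfectly_uniform_general {Ω E : Type*} [MeasurableSpace Ω]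
    [NormedAddCommGroup E] [InnerProductSpace ℝ E] [FiniteDimensional ℝ E] [MeasurableSpace E]
    [BorelSpace E] {τ : ℝ} (hτ : 0 < τ) {P : Measure Ω} [IsProbabilityMeasure P]
    (hex : ∃ f : Ω → sphere (0 : E) 1, Measurable f ∧ P.map f = uniformSphereMeasure E)
    {g : Ω → sphere (0 : E) 1} (hg : Measurable g) :
    (∀ h : Ω → sphere (0 : E) 1, Measurable h →
        logPotentialRisk (expKernel τ) P g ≤ logPotentialRisk (expKernel τ) P h) ↔
      P.map g = uniformSphereMeasure E :=
  forall_logPotentialRisk_le_iff_map_eq (continuous_uncurry_expKernel τ) (fun _ _ ↦ exp_pos _)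
    (isStrictPosDefKernel_expKernel hτ) (kernelPotential_uniformSphereMeasure τ) hex hg

/-- If a perfectly uniform encoder exists, then the minimizers of the uniformity
term over all Borel measurable encoders are exactly the perfectly uniform encoders. -/
theorem unifTerm_minimizers_iff_perfectly_uniform {n m : ℕ} (τ : ℝ) (hτ : 0 < τ) (hm : 2 ≤ m)
    (pdata : Measure (Euc n)) [IsProbabilityMeasure pdata]
    (hex : ∃ f : Euc n → Sph m, Measurable f ∧ pdata.map f = unifSphere m) :
    ∀ g : Euc n → Sph m, Measurable g →
      ((∀ h : Euc n → Sph m, Measurable h → unifTerm pdata g τ ≤ unifTerm pdata h τ) ↔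
        pdata.map g = unifSphere m) :=
  fun _ hg ↦ unifTerm_minimizers_iff_perfectly_uniform_general hτ hex hg
end
end

section
/- For any fixed τ > 0 there exists a constant C (depending only on τ) such that for every Borel measurable encoder f : ℝⁿ → S^{m−1}, every choice of p_data and p_pos, and every positive integer M, the absolute deviation of the normalized contrastive loss from its limit satisfies |(L_contr(f;τ,M) − log M) − (−(1/τ) E_{(x,y)∼p_pos}[f(x)·f(y)] + E_{x∼p_data}[log E_{x⁻∼p_data}[e^{f(x⁻)·f(x)/τ}]])| ≤ C·M^{−1/2}. -/
open MeasureTheory Real Filter Metric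
open scoped RealInnerProductSpace ENNReal Topology BigOperators

noncomputable section

/-- The contrastive loss `L_contr(f; τ, M)` with `M` i.i.d. negative samples. -/
noncomputable def contrLoss {n m : ℕ} (pdata : Measure (Euc n)) (ppos : Measure (Euc n × Euc n))
    (f : Euc n → Sph m) (τ : ℝ) (M : ℕ) : ℝ :=
  ∫ xy, ∫ xneg : Fin M → Euc n,
      -Real.log
        (Real.exp (⟪(f xy.1 : Euc m), (f xy.2 : Euc m)⟫ / τ) /
          (Real.exp (⟪(f xy.1 : Euc m), (f xy.2 : Euc m)⟫ / τ) +
            ∑ i : Fin M, Real.exp (⟪(f (xneg i) : Euc m), (f xy.2 : Euc m)⟫ / τ)))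
    ∂(Measure.pi fun _ : Fin M => pdata) ∂ppos

/-! The loss at a positive pair with score `t` is `log (exp t + ∑ᵢ gᵢ) - t`, where the `M` terms
`gᵢ` are i.i.d. with values in `[e⁻ᴮ, eᴮ]`. The sum `∑ᵢ gᵢ` has mean `M * E[g]` and standard
deviation of order `√M`, while `log` is `1 / (M * e⁻ᴮ)`-Lipschitz on the range involved. Hence
replacing `log (exp t + ∑ᵢ gᵢ)` by `log M + log E[g]` costs `O(√M / M)` in expectation, uniformly
in the pair. -/

open ProbabilityTheory

lemma abs_log_sub_log_le_div {c u v : ℝ} (hc : 0 < c) (hu : c ≤ u) (hv : c ≤ v) :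
    |log u - log v| ≤ |u - v| / c := by
  have deriv_bound : ∀ x ∈ Set.Ici c, ‖x⁻¹‖ ≤ c⁻¹ := fun x hx ↦ by
    rw [norm_of_nonneg (inv_nonneg.2 (hc.le.trans hx))]
    exact inv_anti₀ hc hx
  have lipschitz := (convex_Ici c).norm_image_sub_le_of_norm_hasDerivWithin_le
    (fun x hx ↦ (hasDerivAt_log (hc.trans_le hx).ne').hasDerivWithinAt) deriv_bound hv hu
  rwa [norm_eq_abs, norm_eq_abs, ← div_eq_inv_mul] at lipschitz

section Moments

variable {Ω : Type*} [MeasurableSpace Ω] {μ : Measure Ω} [IsProbabilityMeasure μ]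

lemma integral_abs_sub_integral_le_sqrt_variance {X : Ω → ℝ} (hX : MemLp X 2 μ) :
    ∫ ω, |X ω - μ[X]| ∂μ ≤ √Var[X; μ] := by
  have abs_memLp : MemLp (fun ω ↦ |X ω - μ[X]|) 2 μ := (hX.sub (memLp_const _)).abs
  have variance_abs_nonneg := variance_nonneg (fun ω ↦ |X ω - μ[X]|) μ
  rw [variance_eq_sub abs_memLp] at variance_abs_nonneg
  apply le_sqrt_of_sq_le
  rw [variance_eq_integral hX.aemeasurable]
  simpa only [Pi.pow_apply, sq_abs, sub_nonneg] using variance_abs_nonneg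

variable {ι : Type*} [Fintype ι] {g : Ω → ℝ}

lemma integral_pi_sum_eq_card_mul (hg : Integrable g μ) :
    ∫ x, ∑ i, g (x i) ∂Measure.pi (fun _ : ι ↦ μ) = Fintype.card ι * ∫ ω, g ω ∂μ := by
  rw [integral_finsetSum _ fun i _ ↦ integrable_comp_eval (μ := fun _ : ι ↦ μ) hg]
  simp [integral_comp_eval (μ := fun _ : ι ↦ μ) hg.aestronglyMeasurable]

lemma variance_pi_sum_eq_card_mul (hg : MemLp g 2 μ) :
    Var[fun x ↦ ∑ i, g (x i); Measure.pi fun _ : ι ↦ μ] = Fintype.card ι * Var[g; μ] := by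
  have sum_variance := variance_sum_pi (μ := fun _ : ι ↦ μ) (X := fun _ ↦ g) fun _ ↦ hg
  rw [Finset.sum_fn] at sum_variance
  simpa using sum_variance

lemma integral_abs_pi_sum_sub_le_sqrt (hg : MemLp g 2 μ) :
    ∫ x, |∑ i, g (x i) - Fintype.card ι * ∫ ω, g ω ∂μ| ∂Measure.pi (fun _ : ι ↦ μ) ≤
      √(Fintype.card ι * Var[g; μ]) := by
  have sum_memLp : MemLp (fun x : ι → Ω ↦ ∑ i, g (x i)) 2 (Measure.pi fun _ ↦ μ) :=
    memLp_finsetSum _ fun i _ ↦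
      hg.comp_measurePreserving (measurePreserving_eval (fun _ : ι ↦ μ) i)
  rw [← integral_pi_sum_eq_card_mul (hg.integrable one_le_two), ← variance_pi_sum_eq_card_mul hg]
  exact integral_abs_sub_integral_le_sqrt_variance sum_memLp

lemma integral_abs_pi_sum_sub_le_of_mem_Icc {a b : ℝ} (hg : AEMeasurable g μ)
    (hgab : ∀ᵐ ω ∂μ, g ω ∈ Set.Icc a b) :
    ∫ x, |∑ i, g (x i) - Fintype.card ι * ∫ ω, g ω ∂μ| ∂Measure.pi (fun _ : ι ↦ μ) ≤
      √(Fintype.card ι) * ((b - a) / 2) := by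
  have hab : a ≤ b := hgab.exists.elim fun _ h ↦ h.1.trans h.2
  calc _ ≤ √(Fintype.card ι * Var[g; μ]) :=
        integral_abs_pi_sum_sub_le_sqrt (memLp_of_bounded hgab hg.aestronglyMeasurable 2)
    _ ≤ √(Fintype.card ι * ((b - a) / 2) ^ 2) := by
        gcongr
        exact variance_le_sq_of_bounded hgab hg
    _ = √(Fintype.card ι) * ((b - a) / 2) := by
        rw [sqrt_mul (Nat.cast_nonneg _), sqrt_sq (by linarith)]

end Moments

lemma sum_comp_mem_Icc_card_mul {Ω ι : Type*} [Fintype ι] {g : Ω → ℝ} {a b : ℝ}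
    (hgab : ∀ ω, g ω ∈ Set.Icc a b) (x : ι → Ω) :
    ∑ i, g (x i) ∈ Set.Icc (Fintype.card ι * a) (Fintype.card ι * b) :=
  ⟨by simpa using Finset.card_nsmul_le_sum Finset.univ _ a fun i _ ↦ (hgab (x i)).1,
    by simpa using Finset.sum_le_card_nsmul Finset.univ _ b fun i _ ↦ (hgab (x i)).2⟩

section LogSum

variable {Ω : Type*} [MeasurableSpace Ω] {μ : Measure Ω}
  {ι : Type*} [Fintype ι] [Nonempty ι] {g : Ω → ℝ} {a b c : ℝ}

lemma integrable_log_add_pi_sum [IsFiniteMeasure μ] (hg : Measurable g) (ha : 0 < a)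
    (hgab : ∀ ω, g ω ∈ Set.Icc a b) (hc : 0 ≤ c) :
    Integrable (fun x ↦ log (c + ∑ i, g (x i))) (Measure.pi fun _ : ι ↦ μ) := by
  have lower_pos : 0 < Fintype.card ι * a := mul_pos (Nat.cast_pos.2 Fintype.card_pos) ha
  have log_measurable : Measurable fun x : ι → Ω ↦ log (c + ∑ i, g (x i)) := by fun_prop
  refine .of_mem_Icc (log (Fintype.card ι * a)) (log (c + Fintype.card ι * b))
    log_measurable.aemeasurable (.of_forall fun x ↦ ?_)
  obtain ⟨le_sum, sum_le⟩ := sum_comp_mem_Icc_card_mul hgab x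
  exact ⟨log_le_log lower_pos (by linarith), log_le_log (by linarith) (by linarith)⟩

lemma abs_integral_log_add_pi_sum_sub_le [IsProbabilityMeasure μ] (hg : Measurable g) (ha : 0 < a)
    (hgab : ∀ ω, g ω ∈ Set.Icc a b) (hc : 0 ≤ c) :
    |∫ x, log (c + ∑ i, g (x i)) ∂Measure.pi (fun _ : ι ↦ μ) -
        log (Fintype.card ι * ∫ ω, g ω ∂μ)| ≤
      (c + √(Fintype.card ι) * ((b - a) / 2)) / (Fintype.card ι * a) := by
  set N := (Fintype.card ι : ℝ)
  set P := Measure.pi fun _ : ι ↦ μ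
  set mean := ∫ ω, g ω ∂μ
  have Na_pos : 0 < N * a := mul_pos (Nat.cast_pos.2 Fintype.card_pos) ha
  have g_integrable : Integrable g μ := .of_mem_Icc a b hg.aemeasurable (.of_forall hgab)
  have le_mean : a ≤ mean :=
    ((convex_Icc a b).integral_mem isClosed_Icc (.of_forall hgab) g_integrable).1
  have deviation_integrable : Integrable (fun x ↦ |∑ i, g (x i) - N * mean|) P :=
    ((integrable_finsetSum _ fun i _ ↦ integrable_comp_eval g_integrable).sub
      (integrable_const _)).abs
  have log_deviation_le : ∀ x : ι → Ω, |log (c + ∑ i, g (x i)) - log (N * mean)| ≤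
      (c + |∑ i, g (x i) - N * mean|) / (N * a) := fun x ↦ by
    have le_sum : N * a ≤ ∑ i, g (x i) := (sum_comp_mem_Icc_card_mul hgab x).1
    refine (abs_log_sub_log_le_div Na_pos (by linarith) (by gcongr)).trans ?_
    gcongr
    simpa only [add_sub_assoc, abs_of_nonneg hc] using abs_add_le c (∑ i, g (x i) - N * mean)
  calc |∫ x, log (c + ∑ i, g (x i)) ∂P - log (N * mean)|
      = |∫ x, (log (c + ∑ i, g (x i)) - log (N * mean)) ∂P| := by
        simp [integral_sub (integrable_log_add_pi_sum hg ha hgab hc) (integrable_const _), P]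
    _ ≤ ∫ x, (c + |∑ i, g (x i) - N * mean|) / (N * a) ∂P := by
        rw [← norm_eq_abs]
        refine norm_integral_le_of_norm_le ?_ (.of_forall log_deviation_le)
        exact ((integrable_const c).add deviation_integrable).div_const _
    _ = (c + ∫ x, |∑ i, g (x i) - N * mean| ∂P) / (N * a) := by
        rw [integral_div, integral_add (integrable_const c) deviation_integrable]
        simp
    _ ≤ (c + √N * ((b - a) / 2)) / (N * a) := by
        gcongr
        exact integral_abs_pi_sum_sub_le_of_mem_Icc hg.aemeasurable (.of_forall hgab)

end LogSum

lemma exp_mem_Icc_of_abs_le {t B : ℝ} (ht : |t| ≤ B) : exp t ∈ Set.Icc (exp (-B)) (exp B) :=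
  ⟨exp_le_exp.2 (abs_le.1 ht).1, exp_le_exp.2 (abs_le.1 ht).2⟩

section LogIntegralExp

variable {Ω : Type*} [MeasurableSpace Ω] {μ : Measure Ω} [IsProbabilityMeasure μ]
  {h : Ω → ℝ} {B : ℝ}

lemma integral_exp_mem_Icc (hh : AEMeasurable h μ) (hB : ∀ᵐ ω ∂μ, |h ω| ≤ B) :
    ∫ ω, exp (h ω) ∂μ ∈ Set.Icc (exp (-B)) (exp B) := by
  have exp_mem : ∀ᵐ ω ∂μ, exp (h ω) ∈ Set.Icc (exp (-B)) (exp B) :=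
    hB.mono fun _ ↦ exp_mem_Icc_of_abs_le
  exact (convex_Icc _ _).integral_mem isClosed_Icc exp_mem (.of_mem_Icc _ _ hh.exp exp_mem)

lemma abs_log_integral_exp_le (hh : AEMeasurable h μ) (hB : ∀ᵐ ω ∂μ, |h ω| ≤ B) :
    |log (∫ ω, exp (h ω) ∂μ)| ≤ B := by
  obtain ⟨le_integral, integral_le⟩ := integral_exp_mem_Icc hh hB
  have integral_pos := (exp_pos _).trans_le le_integral
  exact abs_le.2 ⟨(le_log_iff_exp_le integral_pos).2 le_integral,
    (log_le_iff_le_exp integral_pos).2 integral_le⟩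

end LogIntegralExp

lemma neg_log_exp_div_exp_add {s t : ℝ} (ht : 0 ≤ t) :
    -log (exp s / (exp s + t)) = log (exp s + t) - s := by
  rw [log_div (exp_pos s).ne' (by positivity), log_exp, neg_sub]

lemma add_sqrt_mul_div_le_rpow_neg_half {a b c N : ℝ} (ha : 0 < a) (hb : 0 ≤ b) (hcb : c ≤ b)
    (hN : 1 ≤ N) :
    (c + √N * ((b - a) / 2)) / (N * a) ≤ 3 / 2 * (b / a) * N ^ (-(1 / 2) : ℝ) := by
  have sqrt_pos : 0 < √N := sqrt_pos.2 (by linarith)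
  have numerator_le : c + √N * ((b - a) / 2) ≤ 3 / 2 * b * √N := by
    nlinarith [mul_le_mul_of_nonneg_left (one_le_sqrt.2 hN) hb, mul_pos sqrt_pos ha]
  calc _ ≤ 3 / 2 * b * √N / (√N * √N * a) := by
        rw [mul_self_sqrt (by linarith)]
        gcongr
    _ = 3 / 2 * (b / a) * N ^ (-(1 / 2) : ℝ) := by
        rw [rpow_neg (by linarith), ← sqrt_eq_rpow]
        field_simp

section ScoreLoss

variable {α β : Type*} [MeasurableSpace α] [MeasurableSpace β]

/-- The InfoNCE loss, averaged over `M` i.i.d. negatives with law `ν`, at an anchor whose positive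
has score `t` and which scores negatives by `h`. -/
def expectedInfoNCE (ν : Measure α) (h : α → ℝ) (t : ℝ) (M : ℕ) : ℝ :=
  ∫ xneg : Fin M → α, -log (exp t / (exp t + ∑ i, exp (h (xneg i)))) ∂Measure.pi fun _ ↦ ν

/-- The limit of `expectedInfoNCE ν h t M - log M` as the number `M` of negatives grows. -/
def infoNCELimit (ν : Measure α) (h : α → ℝ) (t : ℝ) : ℝ :=
  -t + log (∫ x, exp (h x) ∂ν)

/-- The contrastive loss of an arbitrary score function `s`, with positive pairs of law `ρ` and
negatives of law `ν`. The anchor is the second entry of a pair and need not live in the same space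
as the samples; `contrLoss` is the case `s x y = ⟪f x, f y⟫ / τ`. -/
def scoreContrLoss (ν : Measure α) (ρ : Measure (α × β)) (s : α → β → ℝ) (M : ℕ) : ℝ :=
  ∫ xy, expectedInfoNCE ν (s · xy.2) (s xy.1 xy.2) M ∂ρ

variable {ν : Measure α} {M : ℕ} {B : ℝ} {s : α → β → ℝ}

lemma measurable_expectedInfoNCE [SigmaFinite ν] (hs : Measurable (Function.uncurry s)) :
    Measurable fun xy : α × β ↦ expectedInfoNCE ν (s · xy.2) (s xy.1 xy.2) M := by
  have integrand_measurable : Measurable fun p : (α × β) × (Fin M → α) ↦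
      -log (exp (s p.1.1 p.1.2) / (exp (s p.1.1 p.1.2) + ∑ i, exp (s (p.2 i) p.1.2))) := by
    fun_prop
  exact integrand_measurable.stronglyMeasurable.integral_prod_right.measurable

lemma measurable_log_integral_exp [SFinite ν] (hs : Measurable (Function.uncurry s)) :
    Measurable fun y ↦ log (∫ x, exp (s x y) ∂ν) :=
  hs.exp.stronglyMeasurable.integral_prod_left'.measurable.log

variable [IsProbabilityMeasure ν]

lemma expectedInfoNCE_eq_integral_log_sub {h : α → ℝ} (hh : Measurable h) (hB : ∀ x, |h x| ≤ B)
    (t : ℝ) (hM : 0 < M) :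
    expectedInfoNCE ν h t M =
      ∫ xneg : Fin M → α, log (exp t + ∑ i, exp (h (xneg i))) ∂(Measure.pi fun _ ↦ ν) - t := by
  have : Nonempty (Fin M) := Fin.pos_iff_nonempty.1 hM
  have log_integrable := integrable_log_add_pi_sum (ι := Fin M) (μ := ν) hh.exp (exp_pos (-B))
    (fun x ↦ exp_mem_Icc_of_abs_le (hB x)) (exp_pos t).le
  have neg_log_eq : ∀ xneg : Fin M → α, -log (exp t / (exp t + ∑ i, exp (h (xneg i)))) =
      log (exp t + ∑ i, exp (h (xneg i))) - t := fun xneg ↦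
    neg_log_exp_div_exp_add (Finset.sum_nonneg fun i _ ↦ (exp_pos _).le)
  simp only [expectedInfoNCE, neg_log_eq]
  simp [integral_sub log_integrable (integrable_const t)]

lemma abs_expectedInfoNCE_sub_le {h : α → ℝ} (hh : Measurable h) (hB : ∀ x, |h x| ≤ B) {t : ℝ}
    (ht : |t| ≤ B) (hM : 0 < M) :
    |expectedInfoNCE ν h t M - log M - infoNCELimit ν h t| ≤
      3 / 2 * exp (2 * B) * (M : ℝ) ^ (-(1 / 2) : ℝ) := by
  have : Nonempty (Fin M) := Fin.pos_iff_nonempty.1 hM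
  have mean_pos : 0 < ∫ x, exp (h x) ∂ν :=
    (exp_pos _).trans_le (integral_exp_mem_Icc hh.aemeasurable (.of_forall hB)).1
  calc |expectedInfoNCE ν h t M - log M - infoNCELimit ν h t|
      = |∫ xneg : Fin M → α, log (exp t + ∑ i, exp (h (xneg i))) ∂(Measure.pi fun _ ↦ ν) -
          log (M * ∫ x, exp (h x) ∂ν)| := by
        rw [expectedInfoNCE_eq_integral_log_sub hh hB t hM, infoNCELimit,
          log_mul (Nat.cast_pos.2 hM).ne' mean_pos.ne']
        ring_nf
    _ ≤ (exp t + √M * ((exp B - exp (-B)) / 2)) / (M * exp (-B)) := by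
        simpa only [Fintype.card_fin] using abs_integral_log_add_pi_sum_sub_le (ι := Fin M)
          (μ := ν) hh.exp (exp_pos (-B)) (fun x ↦ exp_mem_Icc_of_abs_le (hB x)) (exp_pos t).le
    _ ≤ 3 / 2 * (exp B / exp (-B)) * (M : ℝ) ^ (-(1 / 2) : ℝ) :=
        add_sqrt_mul_div_le_rpow_neg_half (exp_pos _) (exp_pos _).le (exp_mem_Icc_of_abs_le ht).2
          (Nat.one_le_cast.2 hM)
    _ = 3 / 2 * exp (2 * B) * (M : ℝ) ^ (-(1 / 2) : ℝ) := by
        rw [← exp_sub, sub_neg_eq_add, ← two_mul]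

variable {ρ : Measure (α × β)}

section FiniteMeasure

variable [IsFiniteMeasure ρ]

lemma integrable_score (hs : Measurable (Function.uncurry s)) (hB : ∀ x y, |s x y| ≤ B) :
    Integrable (fun xy ↦ s xy.1 xy.2) ρ :=
  .of_bound hs.aestronglyMeasurable B (.of_forall fun xy ↦ hB xy.1 xy.2)

lemma integrable_log_integral_exp_snd (hs : Measurable (Function.uncurry s))
    (hB : ∀ x y, |s x y| ≤ B) : Integrable (fun xy ↦ log (∫ x, exp (s x xy.2) ∂ν)) ρ :=
  .of_bound ((measurable_log_integral_exp hs).comp measurable_snd).aestronglyMeasurable B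
    (.of_forall fun xy ↦
      abs_log_integral_exp_le hs.of_uncurry_right.aemeasurable (.of_forall (hB · xy.2)))

lemma integrable_infoNCELimit (hs : Measurable (Function.uncurry s)) (hB : ∀ x y, |s x y| ≤ B) :
    Integrable (fun xy ↦ infoNCELimit ν (s · xy.2) (s xy.1 xy.2)) ρ :=
  (integrable_score hs hB).neg.add (integrable_log_integral_exp_snd hs hB)

lemma integral_infoNCELimit (hs : Measurable (Function.uncurry s)) (hB : ∀ x y, |s x y| ≤ B) :
    ∫ xy, infoNCELimit ν (s · xy.2) (s xy.1 xy.2) ∂ρ =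
      -(∫ xy, s xy.1 xy.2 ∂ρ) + ∫ y, log (∫ x, exp (s x y) ∂ν) ∂ρ.snd := by
  rw [Measure.snd, integral_map measurable_snd.aemeasurable
      (measurable_log_integral_exp hs).aestronglyMeasurable, ← integral_neg]
  exact integral_add (integrable_score hs hB).neg (integrable_log_integral_exp_snd hs hB)

lemma integrable_expectedInfoNCE (hs : Measurable (Function.uncurry s))
    (hB : ∀ x y, |s x y| ≤ B) (hM : 0 < M) :
    Integrable (fun xy ↦ expectedInfoNCE ν (s · xy.2) (s xy.1 xy.2) M) ρ := by
  have limit_integrable := integrable_infoNCELimit (ν := ν) (ρ := ρ) hs hB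
  have deviation_integrable : Integrable (fun xy ↦ expectedInfoNCE ν (s · xy.2) (s xy.1 xy.2) M -
      log M - infoNCELimit ν (s · xy.2) (s xy.1 xy.2)) ρ :=
    .of_bound (((measurable_expectedInfoNCE hs).sub_const _).aestronglyMeasurable.sub
      limit_integrable.aestronglyMeasurable) _ (.of_forall fun xy ↦
        abs_expectedInfoNCE_sub_le hs.of_uncurry_right (hB · xy.2) (hB xy.1 xy.2) hM)
  refine ((deviation_integrable.add limit_integrable).add (integrable_const (log M))).congr
    (.of_forall fun xy ↦ ?_)
  simp

end FiniteMeasure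

theorem contrLoss_deviation_le_inv_sqrt_general [IsProbabilityMeasure ρ]
    (hs : Measurable (Function.uncurry s)) (hB : ∀ x y, |s x y| ≤ B) (hM : 0 < M) :
    |(scoreContrLoss ν ρ s M - log M) -
        (-(∫ xy, s xy.1 xy.2 ∂ρ) + ∫ y, log (∫ x, exp (s x y) ∂ν) ∂ρ.snd)| ≤
      3 / 2 * exp (2 * B) * (M : ℝ) ^ (-(1 / 2) : ℝ) := by
  set loss := fun xy : α × β ↦ expectedInfoNCE ν (s · xy.2) (s xy.1 xy.2) M
  set limit := fun xy : α × β ↦ infoNCELimit ν (s · xy.2) (s xy.1 xy.2)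
  have loss_integrable : Integrable loss ρ := integrable_expectedInfoNCE hs hB hM
  have shifted_loss_integrable : Integrable (fun xy ↦ loss xy - log M) ρ :=
    loss_integrable.sub (integrable_const _)
  have deviation_le (xy : α × β) : ‖loss xy - log M - limit xy‖ ≤
      3 / 2 * exp (2 * B) * (M : ℝ) ^ (-(1 / 2) : ℝ) :=
    abs_expectedInfoNCE_sub_le hs.of_uncurry_right (hB · xy.2) (hB xy.1 xy.2) hM
  have integral_deviation : ∫ xy, (loss xy - log M - limit xy) ∂ρ =
      (scoreContrLoss ν ρ s M - log M) - ∫ xy, limit xy ∂ρ := by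
    rw [integral_sub shifted_loss_integrable (integrable_infoNCELimit hs hB),
      integral_sub loss_integrable (integrable_const _), integral_const, probReal_univ, one_smul,
      scoreContrLoss]
  rw [← integral_infoNCELimit hs hB, ← integral_deviation]
  simpa using norm_integral_le_of_norm_le_const (μ := ρ) (.of_forall deviation_le)

end ScoreLoss

lemma abs_inner_div_le_one_div {E : Type*} [NormedAddCommGroup E] [InnerProductSpace ℝ E] {τ : ℝ}
    (hτ : 0 < τ) (u v : sphere (0 : E) 1) : |⟪(u : E), (v : E)⟫ / τ| ≤ 1 / τ := by
  rw [abs_div, abs_of_pos hτ]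
  gcongr
  simpa using abs_real_inner_le_norm (u : E) (v : E)

/-- For fixed `τ > 0` there is a constant `C` (depending only on `τ`) bounding,
uniformly in the encoder, the data distributions and `M ≥ 1`, the deviation of the normalized
contrastive loss from its `M → ∞` limit by `C · M^{−1/2}`. -/
theorem contrLoss_deviation_le_inv_sqrt (τ : ℝ) (hτ : 0 < τ) :
    ∃ C : ℝ, ∀ (n m : ℕ) (pdata : Measure (Euc n)) (ppos : Measure (Euc n × Euc n)),
      IsProbabilityMeasure pdata → IsProbabilityMeasure ppos →
      ppos.map Prod.swap = ppos → ppos.map Prod.fst = pdata → ppos.map Prod.snd = pdata →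
      ∀ f : Euc n → Sph m, Measurable f → ∀ M : ℕ, 0 < M →
        |(contrLoss pdata ppos f τ M - Real.log M) -
            (-(1 / τ) * (∫ xy, ⟪(f xy.1 : Euc m), (f xy.2 : Euc m)⟫ ∂ppos) +
              ∫ x, Real.log (∫ x', Real.exp (⟪(f x' : Euc m), (f x : Euc m)⟫ / τ) ∂pdata) ∂pdata)| ≤
          C * (M : ℝ) ^ (-(1 / 2) : ℝ) := by
  refine ⟨3 / 2 * exp (2 * (1 / τ)), fun n m pdata ppos _ _ _ _ hsnd f hf M hM ↦ ?_⟩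
  have bound := contrLoss_deviation_le_inv_sqrt_general (ν := pdata) (ρ := ppos)
    (s := fun x y ↦ ⟪(f x : Euc m), (f y : Euc m)⟫ / τ) (by unfold Function.uncurry; fun_prop)
    (fun x y ↦ abs_inner_div_le_one_div hτ (f x) (f y)) hM
  rwa [integral_div, Measure.snd, hsnd, div_eq_inv_mul, ← one_div, ← neg_mul] at bound
end
end

section
/- Let d ≥ 1 and t > 0. The Gaussian energy of the uniform measure on S^d has the closed form I_{G_t}[σ_d] = e^{−2t} · Σ_{n=0}^∞ t^{2n} / ( ((d+1)/2)_n · n! ), i.e., I_{G_t}[σ_d] = e^{−2t} · ₀F₁(;(d+1)/2; t²). -/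
open MeasureTheory Real Filter Metric
open scoped RealInnerProductSpace ENNReal Topology BigOperators

noncomputable section

/-- Gaussian energy `I_{G_t}[μ] = ∫∫ exp(−t‖u−v‖²) dμ dμ` of a measure on the sphere. -/
noncomputable def gaussEnergy (t : ℝ) {m : ℕ} (μ : Measure (Sph m)) : ℝ :=
  ∫ u, ∫ v, Real.exp (-t * ‖(u : Euc m) - (v : Euc m)‖ ^ 2) ∂μ ∂μ

/-- Confluent hypergeometric limit function `₀F₁(; α; z) = Σ_n zⁿ/((α)_n n!)`. -/
noncomputable def hyp0F1 (α z : ℝ) : ℝ :=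
  ∑' k : ℕ, z ^ k / ((ascPochhammer ℝ k).eval α * (Nat.factorial k : ℝ))

/-! In polar coordinates the moments of `⟪u, ·⟫` over the unit sphere are, up to a radial Gamma
integral, the moments of `⟪u, x⟫` against the Gaussian weight `exp (-‖x‖²)`. This weight is a
product in any orthonormal basis containing `u`, so these are one-dimensional Gaussian moments. The
averages of `⟪u, v⟫ ^ (2 * k)` come out as the quotient of Pochhammer symbols `(1/2)_k / (dim/2)_k`.
On the sphere `‖u - v‖² = 2 - 2⟪u, v⟫`, so the energy is `exp (-2t)` times an average of
`exp (2t⟪u, v⟫)`; expanding this exponential, the odd moments vanish and the identity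
`(2k)! = 4^k k! (1/2)_k` turns the even ones into the series of `₀F₁(; dim/2; t²)`. -/

section Pochhammer

lemma Gamma_add_natCast_eq_ascPochhammer_mul {a : ℝ} (ha : 0 < a) (k : ℕ) :
    Gamma (a + k) = (ascPochhammer ℝ k).eval a * Gamma a := by
  induction k with
  | zero => simp
  | succ k ih =>
    rw [ascPochhammer_succ_eval, Nat.cast_succ, ← add_assoc, Gamma_add_one (by positivity), ih]
    ring

lemma cast_factorial_two_mul_eq_ascPochhammer (k : ℕ) :
    ((2 * k).factorial : ℝ) = 4 ^ k * k.factorial * (ascPochhammer ℝ k).eval (1 / 2) := by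
  induction k with
  | zero => simp
  | succ k ih =>
    rw [ascPochhammer_succ_eval, show 2 * (k + 1) = 2 * k + 1 + 1 by ring, Nat.factorial_succ,
      Nat.factorial_succ, Nat.factorial_succ]
    push_cast
    rw [ih]
    ring

end Pochhammer

section GaussianMoments

lemma integral_Ioi_pow_mul_exp_neg_sq (n : ℕ) :
    ∫ r in Set.Ioi (0 : ℝ), r ^ n * exp (-r ^ 2) = Gamma ((n + 1) / 2) / 2 := by
  have h := integral_rpow_mul_exp_neg_rpow (p := 2) (q := n) two_pos
    (neg_one_lt_zero.trans_le n.cast_nonneg)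
  simp only [rpow_natCast, rpow_two] at h
  rw [h]
  ring

lemma integral_pow_two_mul_mul_exp_neg_sq (k : ℕ) :
    ∫ y : ℝ, y ^ (2 * k) * exp (-y ^ 2) = Gamma (1 / 2 + k) := by
  have h := integral_comp_abs (f := fun y : ℝ ↦ y ^ (2 * k) * exp (-y ^ 2))
  simp only [(even_two_mul k).pow_abs, sq_abs] at h
  rw [h, integral_Ioi_pow_mul_exp_neg_sq, mul_div_cancel₀ _ two_ne_zero]
  push_cast
  ring_nf

lemma integral_pow_mul_exp_neg_sq_of_odd {n : ℕ} (hn : Odd n) :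
    ∫ y : ℝ, y ^ n * exp (-y ^ 2) = 0 := by
  have h := integral_neg_eq_self (fun y : ℝ ↦ y ^ n * exp (-y ^ 2)) volume
  simp only [hn.neg_pow, neg_sq, neg_mul, integral_neg] at h
  linarith

end GaussianMoments

section ExpSeries

lemma hasSum_integral_pow_div_factorial {X : Type*} [MeasurableSpace X] {μ : Measure X}
    [IsFiniteMeasure μ] {f : X → ℝ} {C : ℝ} (hf : AEStronglyMeasurable f μ)
    (hC : ∀ᵐ x ∂μ, |f x| ≤ C) :
    HasSum (fun n : ℕ ↦ (∫ x, f x ^ n ∂μ) / n.factorial) (∫ x, exp (f x) ∂μ) := by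
  have hexp (y : ℝ) : HasSum (fun n : ℕ ↦ y ^ n / n.factorial) (exp y) := by
    rw [exp_eq_exp_ℝ]
    exact NormedSpace.expSeries_div_hasSum_exp y
  simp only [← integral_div]
  refine hasSum_integral_of_dominated_convergence (fun n _ ↦ C ^ n / n.factorial)
    (fun n ↦ ((continuous_pow n).div_const _).comp_aestronglyMeasurable hf) (fun n ↦ ?_)
    (.of_forall fun _ ↦ (hexp C).summable) (integrable_const _) (.of_forall fun x ↦ hexp (f x))
  filter_upwards [hC] with x hx
  rw [norm_div, norm_pow, norm_eq_abs, RCLike.norm_natCast]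
  gcongr

end ExpSeries

section PolarCoordinates

lemma integral_volumeIoiPow (n : ℕ) (g : ℝ → ℝ) :
    ∫ r : Set.Ioi (0 : ℝ), g r ∂.volumeIoiPow n = ∫ r in Set.Ioi (0 : ℝ), r ^ n * g r := by
  simp only [Measure.volumeIoiPow, ENNReal.ofReal]
  rw [integral_withDensity_eq_integral_smul (measurable_subtype_coe.pow_const _).real_toNNReal,
    integral_subtype_comap measurableSet_Ioi fun r : ℝ ↦ (r ^ n).toNNReal • g r]
  refine setIntegral_congr_fun measurableSet_Ioi fun r hr ↦ ?_
  simp only [NNReal.smul_def, coe_toNNReal _ (pow_nonneg (le_of_lt hr) n), smul_eq_mul]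

variable {E : Type*} [NormedAddCommGroup E] [NormedSpace ℝ E] [FiniteDimensional ℝ E]
  [MeasurableSpace E] [BorelSpace E] [Nontrivial E] (μ : Measure E) [μ.IsAddHaarMeasure]

instance neZero_toSphere : NeZero μ.toSphere :=
  ⟨μ.toSphere_ne_zero⟩

lemma integral_mul_comp_norm_of_homogeneous {f : E → ℝ} {n : ℕ}
    (hf : ∀ r : ℝ, 0 < r → ∀ x, f (r • x) = r ^ n * f x) (g : ℝ → ℝ) :
    ∫ x, f x * g ‖x‖ ∂μ = (∫ v : sphere (0 : E) 1, f v ∂μ.toSphere) *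
      ∫ r in Set.Ioi (0 : ℝ), r ^ (Module.finrank ℝ E - 1 + n) * g r := by
  have hpolar (x : ({0}ᶜ : Set E)) : f x * g ‖(x : E)‖ =
      f (homeomorphUnitSphereProd E x).1 * ((homeomorphUnitSphereProd E x).2.1 ^ n *
        g (homeomorphUnitSphereProd E x).2) := by
    have hx : 0 < ‖(x : E)‖ := norm_pos_iff.2 x.2
    rw [homeomorphUnitSphereProd_apply_fst_coe, homeomorphUnitSphereProd_apply_snd_coe,
      hf _ (inv_pos.2 hx), inv_pow]
    field_simp
  calc
    ∫ x, f x * g ‖x‖ ∂μ = ∫ x : ({0}ᶜ : Set E), f x * g ‖(x : E)‖ ∂μ.comap (↑) := by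
      rw [integral_subtype_comap (measurableSet_singleton _).compl fun x : E ↦ f x * g ‖x‖,
        restrict_compl_singleton]
    _ = ∫ p : sphere (0 : E) 1 × Set.Ioi (0 : ℝ), f p.1 * (p.2.1 ^ n * g p.2)
          ∂μ.toSphere.prod (.volumeIoiPow (Module.finrank ℝ E - 1)) := by
      simp_rw [hpolar]
      exact μ.measurePreserving_homeomorphUnitSphereProd.integral_comp
        (Homeomorph.measurableEmbedding _)
        fun p : sphere (0 : E) 1 × Set.Ioi (0 : ℝ) ↦ f p.1 * (p.2.1 ^ n * g p.2)
    _ = _ := by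
      rw [integral_prod_mul (fun v : sphere (0 : E) 1 ↦ f v)
        (fun r : Set.Ioi (0 : ℝ) ↦ r.1 ^ n * g r),
        integral_volumeIoiPow _ fun r ↦ r ^ n * g r]
      simp only [pow_add, mul_assoc]

end PolarCoordinates

section SphereMoments

variable {E : Type*} [NormedAddCommGroup E] [InnerProductSpace ℝ E] [FiniteDimensional ℝ E]
  [MeasurableSpace E] [BorelSpace E]

lemma integral_prod_comp_inner_orthonormalBasis {ι : Type*} [Fintype ι]
    (b : OrthonormalBasis ι ℝ E) (f : ι → ℝ → ℝ) :
    ∫ x, ∏ i, f i ⟪b i, x⟫ = ∏ i, ∫ y, f i y := by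
  simp only [← b.repr_apply_apply]
  rw [b.measurePreserving_repr.integral_comp b.repr.toHomeomorph.measurableEmbedding
      fun y : EuclideanSpace ℝ ι ↦ ∏ i, f i (y i),
    ← (PiLp.volume_preserving_toLp ι).integral_comp
      (MeasurableEquiv.toLp 2 (ι → ℝ)).measurableEmbedding]
  exact integral_fintype_prod_volume_eq_prod f

lemma integral_comp_inner_mul_exp_neg_norm_sq {u : E} (hu : ‖u‖ = 1) (g : ℝ → ℝ) :
    ∫ x, g ⟪u, x⟫ * exp (-‖x‖ ^ 2) =
      (∫ y, g y * exp (-y ^ 2)) * √π ^ (Module.finrank ℝ E - 1) := by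
  classical
  obtain ⟨s, b, hus, hb⟩ : ∃ (s : Finset E) (b : OrthonormalBasis s ℝ E), u ∈ s ∧ ⇑b = (↑) := by
    have horth : Orthonormal ℝ ((↑) : ({u} : Set E) → E) := by
      simp [hu]
    obtain ⟨s, b, hs, hb⟩ := horth.exists_orthonormalBasis_extension
    exact ⟨s, b, hs rfl, hb⟩
  let i₀ : s := ⟨u, hus⟩
  let F (i : s) (y : ℝ) : ℝ := (if i = i₀ then g y else 1) * exp (-y ^ 2)
  have hF (x : E) : g ⟪u, x⟫ * exp (-‖x‖ ^ 2) = ∏ i, F i ⟪b i, x⟫ := by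
    rw [Finset.prod_mul_distrib, ← exp_sum, Finset.sum_neg_distrib, b.sum_sq_inner_right,
      Finset.prod_ite_eq' _ _ fun i ↦ g ⟪b i, x⟫]
    simp [hb, i₀]
  have hgauss : ∫ y : ℝ, exp (-y ^ 2) = √π := by simpa using integral_gaussian 1
  calc
    ∫ x, g ⟪u, x⟫ * exp (-‖x‖ ^ 2) = ∏ i, ∫ y, F i y := by
      simp_rw [hF]
      exact integral_prod_comp_inner_orthonormalBasis b F
    _ = (∫ y, F i₀ y) * ∏ i ∈ {i₀}ᶜ, ∫ y, F i y := Fintype.prod_eq_mul_prod_compl i₀ _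
    _ = (∫ y, F i₀ y) * ∏ _i ∈ ({i₀}ᶜ : Finset s), √π := by
      congr 1
      refine Finset.prod_congr rfl fun i hi ↦ ?_
      simp_all [F]
    _ = _ := by
      rw [Finset.prod_const, Finset.card_compl, Finset.card_singleton,
        ← Module.finrank_eq_card_basis b.toBasis]
      simp [F]

lemma integral_toSphere_inner_pow_mul_Gamma {u : E} (hu : ‖u‖ = 1) (n : ℕ) :
    (∫ v : sphere (0 : E) 1, ⟪u, (v : E)⟫ ^ n ∂(volume : Measure E).toSphere) *
        (Gamma ((Module.finrank ℝ E + n) / 2) / 2) =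
      (∫ y, y ^ n * exp (-y ^ 2)) * √π ^ (Module.finrank ℝ E - 1) := by
  have : Nontrivial E := ⟨⟨u, 0, norm_ne_zero_iff.1 (by simp [hu])⟩⟩
  have hcast : ((Module.finrank ℝ E - 1 + n : ℕ) : ℝ) + 1 = Module.finrank ℝ E + n := by
    rw [Nat.cast_add, Nat.cast_pred Module.finrank_pos]
    ring
  have hhom (r : ℝ) (_ : 0 < r) (x : E) : ⟪u, r • x⟫ ^ n = r ^ n * ⟪u, x⟫ ^ n := by
    rw [inner_smul_right, mul_pow]
  rw [← integral_comp_inner_mul_exp_neg_norm_sq hu fun y ↦ y ^ n,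
    integral_mul_comp_norm_of_homogeneous volume hhom fun r ↦ exp (-r ^ 2),
    integral_Ioi_pow_mul_exp_neg_sq, hcast]

lemma average_toSphere_inner_pow_of_odd {u : E} (hu : ‖u‖ = 1) {n : ℕ} (hn : Odd n) :
    ⨍ v : sphere (0 : E) 1, ⟪u, (v : E)⟫ ^ n ∂(volume : Measure E).toSphere = 0 := by
  have h := integral_toSphere_inner_pow_mul_Gamma hu n
  have hGamma : 0 < Gamma ((Module.finrank ℝ E + n) / 2) :=
    Gamma_pos_of_pos (by have := hn.pos; positivity)
  rw [integral_pow_mul_exp_neg_sq_of_odd hn, zero_mul] at h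
  rw [average_eq, (mul_eq_zero_iff_right (by positivity)).1 h, smul_zero]

variable [Nontrivial E]

lemma average_toSphere_inner_pow_two_mul {u : E} (hu : ‖u‖ = 1) (k : ℕ) :
    ⨍ v : sphere (0 : E) 1, ⟪u, (v : E)⟫ ^ (2 * k) ∂(volume : Measure E).toSphere =
      (ascPochhammer ℝ k).eval (1 / 2) / (ascPochhammer ℝ k).eval (Module.finrank ℝ E / 2 : ℝ) := by
  have hdim : (0 : ℝ) < Module.finrank ℝ E / 2 := by
    have : 0 < Module.finrank ℝ E := Module.finrank_pos
    positivity
  have hGamma := Gamma_pos_of_pos hdim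
  have hPoch := ascPochhammer_pos k _ hdim
  have hmass : 0 < (volume : Measure E).toSphere.real Set.univ := measureReal_univ_pos
  have h0 := integral_toSphere_inner_pow_mul_Gamma hu (2 * 0)
  have hk := integral_toSphere_inner_pow_mul_Gamma hu (2 * k)
  rw [integral_pow_two_mul_mul_exp_neg_sq] at h0 hk
  rw [show (Module.finrank ℝ E + (2 * k : ℕ) : ℝ) / 2 = Module.finrank ℝ E / 2 + k by
      push_cast; ring,
    Gamma_add_natCast_eq_ascPochhammer_mul hdim,
    Gamma_add_natCast_eq_ascPochhammer_mul one_half_pos] at hk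
  simp only [mul_zero, pow_zero, integral_const, smul_eq_mul, mul_one, Nat.cast_zero,
    add_zero] at h0
  rw [average_eq, smul_eq_mul, inv_mul_eq_div, div_eq_div_iff hmass.ne' hPoch.ne']
  apply mul_right_cancel₀ hGamma.ne'
  linear_combination 2 * hk - 2 * (ascPochhammer ℝ k).eval (1 / 2) * h0

lemma hasSum_average_toSphere_exp_mul_inner {u : E} (hu : ‖u‖ = 1) (c : ℝ) :
    HasSum
      (fun k : ℕ ↦ ((c / 2) ^ 2) ^ k /
        ((ascPochhammer ℝ k).eval (Module.finrank ℝ E / 2 : ℝ) * k.factorial))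
      (⨍ v : sphere (0 : E) 1, exp (c * ⟪u, (v : E)⟫) ∂(volume : Measure E).toSphere) := by
  let moment (n : ℕ) : ℝ :=
    ⨍ v : sphere (0 : E) 1, ⟪u, (v : E)⟫ ^ n ∂(volume : Measure E).toSphere
  have hbound (v : sphere (0 : E) 1) : |c * ⟪u, (v : E)⟫| ≤ |c| := by
    have hinner : |⟪u, (v : E)⟫| ≤ 1 := by simpa [hu] using abs_real_inner_le_norm u (v : E)
    rw [abs_mul]
    exact mul_le_of_le_one_right (abs_nonneg c) hinner
  have hseries : HasSum (fun n : ℕ ↦ c ^ n * moment n / n.factorial)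
      (⨍ v : sphere (0 : E) 1, exp (c * ⟪u, (v : E)⟫) ∂(volume : Measure E).toSphere) := by
    simp only [moment, average, ← integral_const_mul, ← mul_pow]
    exact hasSum_integral_pow_div_factorial (Continuous.aestronglyMeasurable (by fun_prop))
      (.of_forall hbound)
  have hodd (n : ℕ) (hn : n ∉ Set.range (2 * · : ℕ → ℕ)) : c ^ n * moment n / n.factorial = 0 := by
    have hn : Odd n := by simpa [← Nat.not_even_iff_odd, even_iff_exists_two_mul, eq_comm] using hn
    simp [moment, average_toSphere_inner_pow_of_odd hu hn]
  have heven (k : ℕ) : ((c / 2) ^ 2) ^ k /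
        ((ascPochhammer ℝ k).eval (Module.finrank ℝ E / 2 : ℝ) * k.factorial) =
      c ^ (2 * k) * moment (2 * k) / (2 * k).factorial := by
    have hPoch : (ascPochhammer ℝ k).eval (1 / 2 : ℝ) ≠ 0 :=
      (ascPochhammer_pos k _ one_half_pos).ne'
    simp only [moment]
    rw [average_toSphere_inner_pow_two_mul hu, cast_factorial_two_mul_eq_ascPochhammer, div_pow,
      div_pow, ← pow_mul, show (2 : ℝ) ^ 2 = 4 by norm_num]
    field_simp
  exact (((mul_right_injective₀ two_ne_zero).hasSum_iff hodd).2 hseries).congr_fun heven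

lemma average_toSphere_exp_neg_mul_norm_sub_sq {u : E} (hu : ‖u‖ = 1) (t : ℝ) :
    ⨍ v : sphere (0 : E) 1, exp (-t * ‖u - v‖ ^ 2) ∂(volume : Measure E).toSphere =
      exp (-2 * t) * hyp0F1 (Module.finrank ℝ E / 2) (t ^ 2) := by
  have hkernel (v : sphere (0 : E) 1) :
      exp (-t * ‖u - v‖ ^ 2) = exp (-2 * t) * exp (2 * t * ⟪u, (v : E)⟫) := by
    rw [← exp_add, norm_sub_sq_real, hu, norm_eq_of_mem_sphere v]
    ring_nf
  have hsum := (hasSum_average_toSphere_exp_mul_inner hu (2 * t)).tsum_eq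
  rw [mul_div_cancel_left₀ t two_ne_zero] at hsum
  simp_rw [hkernel]
  rw [hyp0F1, hsum, average, integral_const_mul, average]

theorem gaussEnergy_unifSphere_eq_general (t : ℝ) :
    ⨍ u : sphere (0 : E) 1, ⨍ v : sphere (0 : E) 1, exp (-t * ‖(u : E) - v‖ ^ 2)
        ∂(volume : Measure E).toSphere ∂(volume : Measure E).toSphere =
      exp (-2 * t) * hyp0F1 (Module.finrank ℝ E / 2) (t ^ 2) := by
  simp_rw [fun u : sphere (0 : E) 1 ↦
    average_toSphere_exp_neg_mul_norm_sub_sq (norm_eq_of_mem_sphere u) t]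
  exact average_const _ _

end SphereMoments

/-- Closed form for the Gaussian energy of the uniform measure on `S^d`:
`I_{G_t}[σ_d] = e^{−2t} Σ_n t^{2n}/(((d+1)/2)_n n!) = e^{−2t}·₀F₁(;(d+1)/2;t²)`. -/
theorem gaussEnergy_unifSphere_eq (d : ℕ) (hd : 1 ≤ d) (t : ℝ) (ht : 0 < t) :
    gaussEnergy t (unifSphere (d + 1)) =
        Real.exp (-2 * t) *
          ∑' k : ℕ, t ^ (2 * k) /
            ((ascPochhammer ℝ k).eval (((d : ℝ) + 1) / 2) * (Nat.factorial k : ℝ)) ∧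
      gaussEnergy t (unifSphere (d + 1)) =
        Real.exp (-2 * t) * hyp0F1 (((d : ℝ) + 1) / 2) (t ^ 2) := by
  have h : gaussEnergy t (unifSphere (d + 1)) =
      exp (-2 * t) * hyp0F1 (((d : ℝ) + 1) / 2) (t ^ 2) := by
    simpa [gaussEnergy, unifSphere, average] using
      gaussEnergy_unifSphere_eq_general (E := Euc (d + 1)) t
  exact ⟨by simpa only [hyp0F1, ← pow_mul] using h, h⟩
end
end
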